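/- Let V be an n-dimensional real inner product space (n ≥ 2), W a real inner product space, ζ : V × V → W a symmetric bilinear map, and T the tensor defined by the algebraic Gauss equation. Then for every orthonormal basis (e_1,…,e_n) of V, writing ζ_{ij} = ζ(e_i,e_j), τ_T = Σ_{1≤i<j≤n} T(e_i,e_j,e_j,e_i), C^{T,ζ} = (1/n) Σ_{i,j=1}^n ‖ζ_{ij}‖², and C^{T,ζ}(Π_{n−1}) = (1/(n−1)) Σ_{i,j=1}^{n−1} ‖ζ_{ij}‖² for the hyperplane Π_{n−1} spanned by e_1,…,e_{n−1}, one has 2τ_T/(n(n−1)) ≤ (1/2) C^{T,ζ} + ((n+1)/(2n)) C^{T,ζ}(Π_{n−1}). In particular, the T-normalized scalar curvature (τ_T)_{Nor} = 2τ_T/(n(n−1)) is bounded above by the algebraic Casorati curvature δ_{C^{T,ζ}}(n−1) = (1/2)C^{T,ζ} + ((n+1)/(2n)) inf over hyperplanes of C^{T,ζ}(Π_{n−1}). -/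

import Mathlib

open RealInnerProductSpace

/-!
By the Gauss equation, `2τ = ‖H‖² - S`, where `H = ∑ i, ζ_ii` and `S` is the sum of all `‖ζ_ij‖²`.
Let `S'` be the part of that sum with `i` and `j` in a set `s` of `r` of the `n` indices. Then
`S + S'` counts the diagonal entries in `s` twice and the others once, so the Cauchy–Schwarz
inequality with weights `1 / 2` on `s` and `1` off `s` gives `‖H‖² ≤ (n - r / 2) (S + S')`. The
theorem is the case `r = n - 1`.
-/

open Finset

section Sums

variable {ι M E : Type*}

theorem two_nsmul_sum_sum_ite_lt [Fintype ι] [LinearOrder ι] [AddCommMonoid M] {f : ι → ι → M}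
    (hsymm : ∀ i j, f i j = f j i) (hdiag : ∀ i, f i i = 0) :
    2 • ∑ i, ∑ j, (if i < j then f i j else 0) = ∑ i, ∑ j, f i j := by
  have hsplit (i j : ι) :
      (if i < j then f i j else 0) + (if j < i then f j i else 0) = f i j := by
    rcases lt_trichotomy i j with h | rfl | h
    · simp [h, h.not_gt]
    · simp [hdiag]
    · simp [h, h.not_gt, hsymm i j]
  calc 2 • ∑ i, ∑ j, (if i < j then f i j else 0)
      = ∑ i, ∑ j, (if i < j then f i j else 0) + ∑ i, ∑ j, (if j < i then f j i else 0) := by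
        rw [two_nsmul]
        congr 1
        exact sum_comm
    _ = ∑ i, ∑ j, f i j := by simp only [← sum_add_distrib, hsplit]

theorem sum_diag_le_sum_sum [AddCommMonoid M] [PartialOrder M] [IsOrderedAddMonoid M]
    {f : ι → ι → M} (hf : ∀ i j, 0 ≤ f i j) (s : Finset ι) :
    ∑ i ∈ s, f i i ≤ ∑ i ∈ s, ∑ j ∈ s, f i j :=
  sum_le_sum fun i hi ↦ single_le_sum (fun j _ ↦ hf i j) hi

theorem norm_sum_sq_le_sum_mul_sum_norm_sq_div [SeminormedAddCommGroup E] (s : Finset ι)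
    (x : ι → E) {w : ι → ℝ} (hw : ∀ i ∈ s, 0 < w i) :
    ‖∑ i ∈ s, x i‖ ^ 2 ≤ (∑ i ∈ s, w i) * ∑ i ∈ s, ‖x i‖ ^ 2 / w i := by
  rcases s.eq_empty_or_nonempty with rfl | hs
  · simp
  calc ‖∑ i ∈ s, x i‖ ^ 2
      ≤ (∑ i ∈ s, ‖x i‖) ^ 2 := by gcongr; exact norm_sum_le s x
    _ ≤ (∑ i ∈ s, w i) * ∑ i ∈ s, ‖x i‖ ^ 2 / w i :=
      (div_le_iff₀' (sum_pos hw hs)).1 (sq_sum_div_le_sum_sq_div s _ hw)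

theorem norm_sum_diag_sq_le [Fintype ι] [SeminormedAddCommGroup E] (z : ι → ι → E)
    (s : Finset ι) :
    ‖∑ i, z i i‖ ^ 2 ≤ (Fintype.card ι - #s / 2 : ℝ) *
      (∑ i, ∑ j, ‖z i j‖ ^ 2 + ∑ i ∈ s, ∑ j ∈ s, ‖z i j‖ ^ 2) := by
  classical
  let w (i : ι) : ℝ := if i ∈ s then 1 / 2 else 1
  have hw (i : ι) : 0 < w i := by dsimp only [w]; split_ifs <;> norm_num
  have hsum : ∑ i, w i = Fintype.card ι - #s / 2 := by
    have hwi (i : ι) : w i = 1 - if i ∈ s then 1 / 2 else 0 := by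
      dsimp only [w]; split_ifs <;> norm_num
    simp [hwi, div_eq_mul_inv]
  have hdiv : ∑ i, ‖z i i‖ ^ 2 / w i = ∑ i, ‖z i i‖ ^ 2 + ∑ i ∈ s, ‖z i i‖ ^ 2 := by
    have hwi (i : ι) : ‖z i i‖ ^ 2 / w i = ‖z i i‖ ^ 2 + if i ∈ s then ‖z i i‖ ^ 2 else 0 := by
      dsimp only [w]; split_ifs <;> ring
    simp [hwi, sum_add_distrib]
  have hnonneg (i j : ι) : 0 ≤ ‖z i j‖ ^ 2 := sq_nonneg _
  rw [← hsum]
  calc ‖∑ i, z i i‖ ^ 2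
      ≤ (∑ i, w i) * ∑ i, ‖z i i‖ ^ 2 / w i :=
        norm_sum_sq_le_sum_mul_sum_norm_sq_div univ _ fun i _ ↦ hw i
    _ ≤ (∑ i, w i) * (∑ i, ∑ j, ‖z i j‖ ^ 2 + ∑ i ∈ s, ∑ j ∈ s, ‖z i j‖ ^ 2) := by
        rw [hdiv]
        exact mul_le_mul_of_nonneg_left
          (add_le_add (sum_diag_le_sum_sum hnonneg univ) (sum_diag_le_sum_sum hnonneg s))
          (sum_nonneg fun i _ ↦ (hw i).le)

end Sums

/-- The algebraic Casorati curvature of the span of the `e i` with `i ∈ s`, for the components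
`z i j = ζ(e i, e j)` of `ζ` in a frame `e`. It is `0` for `s = ∅`, by division by zero. -/
noncomputable def casoratiCurvature {ι W : Type*} [SeminormedAddCommGroup W]
    (z : ι → ι → W) (s : Finset ι) : ℝ :=
  1 / #s * ∑ i ∈ s, ∑ j ∈ s, ‖z i j‖ ^ 2

section CasoratiInequality

variable {ι W : Type*} [Fintype ι] [LinearOrder ι] [SeminormedAddCommGroup W]
  [InnerProductSpace ℝ W]

/-- The `T`-scalar curvature `∑ i < j, T(e i, e j, e j, e i)`, with `T` expressed through the
components `z i j = ζ(e i, e j)` by the algebraic Gauss equation. -/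
noncomputable def gaussScalarCurvature (z : ι → ι → W) : ℝ :=
  ∑ i, ∑ j, if i < j then ⟪z i i, z j j⟫ - ⟪z i j, z j i⟫ else 0

theorem two_mul_gaussScalarCurvature {z : ι → ι → W} (hz : ∀ i j, z i j = z j i) :
    2 * gaussScalarCurvature z = ‖∑ i, z i i‖ ^ 2 - ∑ i, ∑ j, ‖z i j‖ ^ 2 := by
  have hsymm (i j : ι) : ⟪z i i, z j j⟫ - ⟪z i j, z j i⟫ = ⟪z j j, z i i⟫ - ⟪z j i, z i j⟫ := by
    rw [real_inner_comm (z j j), real_inner_comm (z j i)]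
  calc 2 * gaussScalarCurvature z
      = ∑ i, ∑ j, (⟪z i i, z j j⟫ - ⟪z i j, z j i⟫) := by
        rw [gaussScalarCurvature, ← two_nsmul_sum_sum_ite_lt hsymm fun i ↦ sub_self _,
          nsmul_eq_mul, Nat.cast_ofNat]
    _ = ∑ i, ∑ j, (⟪z i i, z j j⟫ - ‖z i j‖ ^ 2) := by
        simp only [← real_inner_self_eq_norm_sq, hz]
    _ = ‖∑ i, z i i‖ ^ 2 - ∑ i, ∑ j, ‖z i j‖ ^ 2 := by
        rw [← real_inner_self_eq_norm_sq (∑ i, z i i), sum_inner]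
        simp only [inner_sum, sum_sub_distrib]

theorem two_mul_gaussScalarCurvature_le {z : ι → ι → W} (hz : ∀ i j, z i j = z j i)
    (s : Finset ι) :
    2 * gaussScalarCurvature z ≤
      (Fintype.card ι - #s / 2 - 1) * ∑ i, ∑ j, ‖z i j‖ ^ 2 +
        (Fintype.card ι - #s / 2) * ∑ i ∈ s, ∑ j ∈ s, ‖z i j‖ ^ 2 := by
  rw [two_mul_gaussScalarCurvature hz]
  linarith [norm_sum_diag_sq_le z s]

theorem algebraic_casorati_inequality_delta_general [Nontrivial ι] {z : ι → ι → W}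
    (hz : ∀ i j, z i j = z j i) {s : Finset ι} (hs : #s + 1 = Fintype.card ι) :
    2 * gaussScalarCurvature z / (Fintype.card ι * (Fintype.card ι - 1)) ≤
      1 / 2 * casoratiCurvature z univ +
        (Fintype.card ι + 1) / (2 * Fintype.card ι) * casoratiCurvature z s := by
  have hpos : (0 : ℝ) < #s := by
    have := Fintype.one_lt_card (α := ι)
    exact_mod_cast (by lia : 0 < #s)
  have hcard : (Fintype.card ι : ℝ) = #s + 1 := by exact_mod_cast hs.symm
  have h := two_mul_gaussScalarCurvature_le hz s
  rw [casoratiCurvature, casoratiCurvature, card_univ]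
  rw [hcard] at h ⊢
  rw [add_sub_cancel_right, div_le_iff₀ (by positivity)]
  refine h.trans_eq ?_
  field_simp
  ring

end CasoratiInequality

/-- The normalized `T`-scalar curvature satisfies
`2τ_T/(n(n−1)) ≤ (1/2) C^{T,ζ} + ((n+1)/(2n)) C^{T,ζ}(P_{n−1})` for every
orthonormal basis, where `P_{n−1}` is the hyperplane spanned by `e_1,…,e_{n−1}`. -/
theorem algebraic_casorati_inequality_delta
    {V W : Type*} [NormedAddCommGroup V] [InnerProductSpace ℝ V]
    [FiniteDimensional ℝ V] [NormedAddCommGroup W] [InnerProductSpace ℝ W]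
    (n : ℕ) (hn : 2 ≤ n) (e : OrthonormalBasis (Fin n) ℝ V)
    (ζ : V →ₗ[ℝ] V →ₗ[ℝ] W) (hζ : ∀ X Y : V, ζ X Y = ζ Y X)
    (T : V → V → V → V → ℝ)
    (hT : ∀ X Y Z W' : V, T X Y Z W' = ⟪ζ X W', ζ Y Z⟫ - ⟪ζ X Z, ζ Y W'⟫)
    (τ C CP : ℝ)
    (hτ : τ = ∑ i : Fin n, ∑ j : Fin n,
        if i < j then T (e i) (e j) (e j) (e i) else 0)
    (hC : C = (1 / (n : ℝ)) * ∑ i : Fin n, ∑ j : Fin n, ‖ζ (e i) (e j)‖ ^ 2)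
    (hCP : CP = (1 / ((n : ℝ) - 1)) *
        ∑ i ∈ Finset.univ.filter (fun i : Fin n => (i : ℕ) < n - 1),
          ∑ j ∈ Finset.univ.filter (fun j : Fin n => (j : ℕ) < n - 1),
            ‖ζ (e i) (e j)‖ ^ 2) :
    2 * τ / ((n : ℝ) * ((n : ℝ) - 1)) ≤
      (1 / 2) * C + (((n : ℝ) + 1) / (2 * (n : ℝ))) * CP := by
  have : Nontrivial (Fin n) := Fin.nontrivial_iff_two_le.2 hn
  have hs : #{i : Fin n | (i : ℕ) < n - 1} + 1 = Fintype.card (Fin n) := by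
    rw [Fin.card_filter_val_lt, Fintype.card_fin]
    lia
  have hs_cast : (#{i : Fin n | (i : ℕ) < n - 1} : ℝ) = n - 1 :=
    eq_sub_of_add_eq (mod_cast hs.trans (Fintype.card_fin n))
  subst hτ hC hCP
  simpa only [gaussScalarCurvature, casoratiCurvature, hT, hs_cast, card_univ, Fintype.card_fin]
    using algebraic_casorati_inequality_delta_general (fun i j ↦ hζ (e i) (e j)) hs
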